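/- Let d ≥ 1, β > 0, and let M(v) = (β/(2π))^{d/2} exp(−β|v|²/2) be the Maxwellian density on ℝ^d. Let ω ∈ ℂ with Re ω > 0 and let φ : ℝ^d → ℝ be measurable with ∫_{ℝ^d} |k| φ(k)² dk < ∞. For v₀ ∈ ℝ^d define the complex d×d matrix A(v₀) with entries A_{ab}(v₀) = ∫_{ℝ^d} k_a k_b φ(k)² ( ∫_{ℝ^d} M(v₁) / (ω + i k·(v₁ − v₀)) dv₁ ) dk; the inner integral converges absolutely since Re ω > 0, and the outer integral converges absolutely since the inner integral has modulus at most e^{β/2}/|k|. Then for every compactly supported smooth g : ℝ^d → ℂ, the quadratic form is nonnegative: Re ∫_{ℝ^d} Σ_{a,b=1}^d conj(∂_a g(v₀)) · A_{ab}(v₀) · ∂_b g(v₀) dv₀ ≥ 0. -/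

import Mathlib

open MeasureTheory
open scoped ENNReal RealInnerProductSpace

/-- The Maxwellian density `M(v) = (β/(2π))^{d/2} exp(−β|v|²/2)` on `ℝ^d`. -/
noncomputable def maxwellian (d : ℕ) (β : ℝ) (v : EuclideanSpace ℝ (Fin d)) : ℝ :=
  (β / (2 * Real.pi)) ^ ((d : ℝ) / 2) * Real.exp (-β * ‖v‖ ^ 2 / 2)

/-- The matrix field `A(v₀)` with entries
`A_{ab}(v₀) = ∫ k_a k_b φ(k)² (∫ M(v₁)/(ω + i k·(v₁−v₀)) dv₁) dk`. -/
noncomputable def Amat (d : ℕ) (β : ℝ) (ω : ℂ) (φ : EuclideanSpace ℝ (Fin d) → ℝ)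
    (v₀ : EuclideanSpace ℝ (Fin d)) (a b : Fin d) : ℂ :=
  ∫ k : EuclideanSpace ℝ (Fin d),
    ((k a : ℝ) : ℂ) * ((k b : ℝ) : ℂ) * ((φ k : ℝ) : ℂ) ^ 2 *
      ∫ v₁, (maxwellian d β v₁ : ℂ) / (ω + Complex.I * ((⟪k, v₁ - v₀⟫ : ℝ) : ℂ))

lemma re_integral_nonneg_aux {α : Type*} [MeasurableSpace α] (μ : Measure α) (f : α → ℂ)
    (h : ∀ x, 0 ≤ (f x).re) : 0 ≤ (∫ x, f x ∂μ).re := by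
  by_cases hf : Integrable f μ
  · have := Complex.reCLM.integral_comp_comm hf
    simp only [Complex.reCLM_apply] at this
    rw [← this]
    exact integral_nonneg h
  · rw [integral_undef hf]; simp

lemma inner_re_nonneg_aux (d : ℕ) (β : ℝ) (hβ : 0 < β) (ω : ℂ) (hω : 0 < ω.re)
    (k v₀ : EuclideanSpace ℝ (Fin d)) :
    0 ≤ (∫ v₁, (maxwellian d β v₁ : ℂ) / (ω + Complex.I * ((⟪k, v₁ - v₀⟫ : ℝ) : ℂ))).re := by
  apply re_integral_nonneg_aux
  intro v
  have hM : 0 ≤ maxwellian d β v := by unfold maxwellian; positivity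
  rw [div_eq_mul_inv, Complex.re_ofReal_mul]
  apply mul_nonneg hM
  rw [Complex.inv_re]
  apply div_nonneg _ (Complex.normSq_nonneg _)
  simp; exact hω.le

lemma maxwellian_integrable_aux (d : ℕ) (β : ℝ) (hβ : 0 < β) :
    Integrable (fun v : EuclideanSpace ℝ (Fin d) => maxwellian d β v) := by
  have h := GaussianFourier.integrable_cexp_neg_mul_sq_norm_add
    (V := EuclideanSpace ℝ (Fin d)) (b := ((β/2 : ℝ) : ℂ)) (by simpa using hβ) 0 0
  have h2 := h.norm
  unfold maxwellian
  apply Integrable.const_mul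
  refine h2.congr (Filter.Eventually.of_forall fun v => ?_)
  simp only [Complex.norm_exp]
  congr 1
  simp [← Complex.ofReal_pow]
  norm_cast
  ring

lemma maxwellian_cont_aux (d : ℕ) (β : ℝ) : Continuous (maxwellian d β) := by
  unfold maxwellian; fun_prop

lemma inner_bound_aux (d : ℕ) (β : ℝ) (hβ : 0 < β) (ω : ℂ) (hω : 0 < ω.re) :
    ∃ C : ℝ, ∀ k v₀ : EuclideanSpace ℝ (Fin d), k ≠ 0 →
    ‖∫ v₁, (maxwellian d β v₁ : ℂ) / (ω + Complex.I * ((⟪k, v₁ - v₀⟫ : ℝ) : ℂ))‖ ≤ C / ‖k‖ := by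
  set c0 : ℝ := (β / (2 * Real.pi)) ^ ((d : ℝ) / 2) with hc0
  set c1 : ℂ := ((Real.pi : ℂ) / ((β/2 : ℝ) : ℂ)) ^
    ((Module.finrank ℝ (EuclideanSpace ℝ (Fin d)) : ℂ) / 2) with hc1
  refine ⟨|c0| * ‖c1‖ * (Real.sqrt (Real.pi * (2 * β)) / 2), fun k v₀ hk => ?_⟩
  have hkpos : 0 < ‖k‖ := norm_pos_iff.mpr hk
  let F : EuclideanSpace ℝ (Fin d) → ℝ → ℂ := fun v t =>
    (maxwellian d β v : ℂ) * Complex.exp (-(ω + Complex.I * ((⟪k, v - v₀⟫ : ℝ) : ℂ)) * t)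
  have hFcont : Continuous (Function.uncurry F) := by
    have := maxwellian_cont_aux d β
    simp only [F, Function.uncurry_def]
    fun_prop
  have hFint : Integrable (Function.uncurry F)
      ((volume : Measure (EuclideanSpace ℝ (Fin d))).prod (volume.restrict (Set.Ioi (0:ℝ)))) := by
    have h1 : Integrable (fun t : ℝ => Real.exp (-ω.re * t)) (volume.restrict (Set.Ioi (0:ℝ))) :=
      integrableOn_exp_mul_Ioi (by linarith) 0
    refine ((maxwellian_integrable_aux d β hβ).mul_prod h1).mono hFcont.aestronglyMeasurable
      (Filter.Eventually.of_forall fun p => ?_)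
    simp only [F, Function.uncurry_def, norm_mul, Complex.norm_exp, Complex.norm_real,
      Real.norm_eq_abs, Real.abs_exp]
    apply le_of_eq
    congr 2
    simp
  have hL : (∫ v₁, (maxwellian d β v₁ : ℂ) / (ω + Complex.I * ((⟪k, v₁ - v₀⟫ : ℝ) : ℂ)))
      = ∫ v, ∫ t in Set.Ioi (0:ℝ), F v t := by
    congr 1; ext v
    simp only [F]
    rw [integral_const_mul, integral_exp_mul_complex_Ioi (by simpa using hω)]
    simp only [Complex.ofReal_zero, mul_zero, Complex.exp_zero]
    rw [div_eq_mul_inv, neg_div_neg_eq, one_div]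
  rw [hL, integral_integral_swap hFint]
  have hb : ∀ t : ℝ, t ∈ Set.Ioi (0:ℝ) → ‖∫ v, F v t‖ ≤
      |c0| * ‖c1‖ * Real.exp (-(‖k‖^2/(2*β)) * t^2) := by
    intro t ht
    have e : ∀ v, F v t = ((c0 : ℂ) * Complex.exp (-(ω - Complex.I * ((⟪k, v₀⟫ : ℝ) : ℂ)) * t)) *
        Complex.exp (-((β/2 : ℝ) : ℂ) * ‖v‖^2 + (-Complex.I * t) * ((⟪k, v⟫ : ℝ) : ℂ)) := by
      intro v
      simp only [F, maxwellian, ← hc0]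
      rw [inner_sub_right]
      push_cast
      rw [mul_assoc, mul_assoc, ← Complex.exp_add, ← Complex.exp_add]
      congr 2
      ring
    simp_rw [e]
    rw [integral_const_mul, GaussianFourier.integral_cexp_neg_mul_sq_norm_add (by simpa using hβ),
      ← hc1]
    simp only [norm_mul, Complex.norm_exp, Complex.norm_real, Real.norm_eq_abs]
    have e1 : Real.exp (-(ω - Complex.I * ((⟪k, v₀⟫ : ℝ) : ℂ)) * t).re ≤ 1 := by
      rw [Real.exp_le_one_iff]
      have : 0 < t := ht
      simp
      nlinarith [mul_pos hω this]
    have e2 : ((-Complex.I * (t:ℂ)) ^ 2 * (‖k‖:ℂ) ^ 2 / (4 * ((β/2 : ℝ) : ℂ))).re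
        = -(‖k‖^2/(2*β)) * t^2 := by
      have : ((-Complex.I * (t:ℂ)) ^ 2 * (‖k‖:ℂ) ^ 2 / (4 * ((β/2 : ℝ) : ℂ)))
        = ((-(‖k‖^2/(2*β)) * t^2 : ℝ) : ℂ) := by
        have hb' : (β : ℂ) ≠ 0 := by exact_mod_cast hβ.ne'
        rw [mul_pow, neg_sq, Complex.I_sq]
        push_cast
        field_simp
        ring
      rw [this, Complex.ofReal_re]
    rw [e2]
    calc _ ≤ |c0| * 1 * (‖c1‖ * Real.exp (-(‖k‖^2/(2*β)) * t^2)) := by gcongr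
      _ = _ := by ring
  have hgi : Integrable (fun t : ℝ => |c0| * ‖c1‖ * Real.exp (-(‖k‖^2/(2*β)) * t^2))
      (volume.restrict (Set.Ioi (0:ℝ))) :=
    ((integrable_exp_neg_mul_sq (by positivity)).const_mul _).restrict
  refine (norm_integral_le_of_norm_le hgi
    ((ae_restrict_iff' measurableSet_Ioi).mpr (Filter.Eventually.of_forall hb))).trans ?_
  rw [integral_const_mul, integral_gaussian_Ioi]
  apply le_of_eq
  have : Real.pi / (‖k‖^2/(2*β)) = Real.pi * (2*β) / ‖k‖^2 := by field_simp
  rw [this, Real.sqrt_div (by positivity), Real.sqrt_sq hkpos.le]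
  ring

lemma entry_integrable_aux (d : ℕ) (β : ℝ) (hβ : 0 < β) (ω : ℂ) (hω : 0 < ω.re)
    (φ : EuclideanSpace ℝ (Fin d) → ℝ) (hφ : Measurable φ)
    (hint : Integrable (fun k : EuclideanSpace ℝ (Fin d) => ‖k‖ * (φ k) ^ 2))
    (v₀ : EuclideanSpace ℝ (Fin d)) (a b : Fin d) :
    Integrable (fun k : EuclideanSpace ℝ (Fin d) =>
      ((k a : ℝ) : ℂ) * ((k b : ℝ) : ℂ) * ((φ k : ℝ) : ℂ) ^ 2 *
      ∫ v₁, (maxwellian d β v₁ : ℂ) / (ω + Complex.I * ((⟪k, v₁ - v₀⟫ : ℝ) : ℂ))) := by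
  obtain ⟨C, hC⟩ := inner_bound_aux d β hβ ω hω
  have hm : StronglyMeasurable (fun k : EuclideanSpace ℝ (Fin d) =>
      ∫ v₁, (maxwellian d β v₁ : ℂ) / (ω + Complex.I * ((⟪k, v₁ - v₀⟫ : ℝ) : ℂ))) := by
    have hj : StronglyMeasurable (Function.uncurry
        (fun k v₁ : EuclideanSpace ℝ (Fin d) =>
        (maxwellian d β v₁ : ℂ) / (ω + Complex.I * ((⟪k, v₁ - v₀⟫ : ℝ) : ℂ)))) := by
      have h1 := maxwellian_cont_aux d β
      apply Continuous.stronglyMeasurable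
      simp only [Function.uncurry_def]
      refine Continuous.div (by fun_prop) (by fun_prop) ?_
      intro p h
      have := congrArg Complex.re h
      simp at this
      linarith
    exact hj.integral_prod_right
  refine (hint.const_mul C).mono ?_ (Filter.Eventually.of_forall fun k => ?_)
  · apply AEStronglyMeasurable.mul _ hm.aestronglyMeasurable
    apply Measurable.aestronglyMeasurable
    fun_prop
  · by_cases hk : k = 0
    · simp [hk]
    have hkpos : 0 < ‖k‖ := norm_pos_iff.mpr hk
    have ha := PiLp.norm_apply_le k a
    have hb := PiLp.norm_apply_le k b
    have hI := hC k v₀ hk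
    simp only [norm_mul, norm_pow, Complex.norm_real]
    calc _ ≤ ‖k‖ * ‖k‖ * ‖φ k‖^2 * (C / ‖k‖) := by gcongr
      _ = C * (‖k‖ * ‖φ k‖^2) := by field_simp
      _ ≤ _ := by
        rw [norm_norm]
        gcongr
        exact Real.le_norm_self C

theorem stmt8 (d : ℕ) (hd : 1 ≤ d) (β : ℝ) (hβ : 0 < β) (ω : ℂ) (hω : 0 < ω.re)
    (φ : EuclideanSpace ℝ (Fin d) → ℝ) (hφ : Measurable φ)
    (hint : Integrable (fun k : EuclideanSpace ℝ (Fin d) => ‖k‖ * (φ k) ^ 2))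
    (g : EuclideanSpace ℝ (Fin d) → ℂ)
    (hg : ContDiff ℝ (⊤ : ℕ∞) g) (hgs : HasCompactSupport g) :
    0 ≤ (∫ v₀, ∑ a : Fin d, ∑ b : Fin d,
        (starRingEnd ℂ) (fderiv ℝ g v₀ (EuclideanSpace.single a 1)) *
          Amat d β ω φ v₀ a b *
          fderiv ℝ g v₀ (EuclideanSpace.single b 1)).re := by
  apply re_integral_nonneg_aux
  intro v₀
  generalize hG : (fun a : Fin d => fderiv ℝ g v₀ (EuclideanSpace.single a 1)) = G
  have hG' : ∀ a, fderiv ℝ g v₀ (EuclideanSpace.single a 1) = G a := fun a => congrFun hG a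
  simp_rw [hG']
  have hi := entry_integrable_aux d β hβ ω hω φ hφ hint v₀
  have key : ∑ a : Fin d, ∑ b : Fin d, (starRingEnd ℂ) (G a) * Amat d β ω φ v₀ a b * G b
      = ∫ k : EuclideanSpace ℝ (Fin d), ∑ a : Fin d, ∑ b : Fin d,
        (starRingEnd ℂ) (G a) * (((k a : ℝ) : ℂ) * ((k b : ℝ) : ℂ) * ((φ k : ℝ) : ℂ) ^ 2 *
      ∫ v₁, (maxwellian d β v₁ : ℂ) / (ω + Complex.I * ((⟪k, v₁ - v₀⟫ : ℝ) : ℂ))) * G b := by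
    rw [integral_finsetSum _ (fun a _ => integrable_finsetSum _
      (fun b _ => ((hi a b).const_mul _).mul_const _))]
    refine Finset.sum_congr rfl fun a _ => ?_
    rw [integral_finsetSum _ (fun b _ => ((hi a b).const_mul _).mul_const _)]
    refine Finset.sum_congr rfl fun b _ => ?_
    rw [integral_mul_const, integral_const_mul, Amat]
  rw [key]
  apply re_integral_nonneg_aux
  intro k
  have hI := inner_re_nonneg_aux d β hβ ω hω k v₀
  generalize (∫ v₁, (maxwellian d β v₁ : ℂ) / (ω + Complex.I * ((⟪k, v₁ - v₀⟫ : ℝ) : ℂ))) = J at hI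
  have e : ∑ a : Fin d, ∑ b : Fin d,
        (starRingEnd ℂ) (G a) * (((k a : ℝ) : ℂ) * ((k b : ℝ) : ℂ) * ((φ k : ℝ) : ℂ) ^ 2 * J) * G b
      = ((φ k ^ 2 * Complex.normSq (∑ a, (k a : ℂ) * G a) : ℝ) : ℂ) * J := by
    push_cast
    rw [Complex.normSq_eq_conj_mul_self, map_sum, Finset.sum_mul_sum, Finset.mul_sum,
      Finset.sum_mul]
    refine Finset.sum_congr rfl fun a _ => ?_
    rw [Finset.mul_sum, Finset.sum_mul]
    refine Finset.sum_congr rfl fun b _ => ?_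
    rw [map_mul, Complex.conj_ofReal]
    ring
  rw [e, Complex.re_ofReal_mul]
  exact mul_nonneg (mul_nonneg (sq_nonneg _) (Complex.normSq_nonneg _)) hI
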